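/- For every positive integer n, the Pfaffian of the 2n×2n skew-symmetric matrix whose (i,j) entry is (j−i)·D_{i+j−3} for 1 ≤ i,j ≤ 2n (with the convention that the (1,1) entry, whose factor j−i vanishes, is 0) equals 2^{(n+1)(n−1)}·(2n−1)·∏_{k=1}^{n−1} (4k−1). -/

import Mathlib

/-- The Pfaffian of a `2N × 2N` matrix, defined as the sum over all partitions of
the index set into two-element blocks (encoded as permutations `σ` with
`σ(2i) < σ(2i+1)` and `σ(0) < σ(2) < … < σ(2N-2)`, one for each partition) of the
sign of `σ` times the product `∏ i, A (σ (2i)) (σ (2i+1))`. -/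
def pfaffian {R : Type*} [CommRing R] {N : ℕ}
    (A : Matrix (Fin (2 * N)) (Fin (2 * N)) R) : R :=
  ∑ σ ∈ Finset.univ.filter (fun σ : Equiv.Perm (Fin (2 * N)) =>
      (∀ i : Fin N, σ ⟨2 * i.val, by have := i.isLt; omega⟩
          < σ ⟨2 * i.val + 1, by have := i.isLt; omega⟩) ∧
      (∀ i j : Fin N, i < j → σ ⟨2 * i.val, by have := i.isLt; omega⟩
          < σ ⟨2 * j.val, by have := j.isLt; omega⟩)),
    (Equiv.Perm.sign σ : ℤ) •
      ∏ i : Fin N, A (σ ⟨2 * i.val, by have := i.isLt; omega⟩)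
        (σ ⟨2 * i.val + 1, by have := i.isLt; omega⟩)

/-- The `n`-th central Delannoy number `D_n = ∑_{k=0}^{n} C(n,k)·C(n+k,k)`. -/
def delannoy (n : ℕ) : ℚ :=
  ∑ k ∈ Finset.range (n + 1), (n.choose k : ℚ) * ((n + k).choose k)

/-!
The Delannoy number `D_n` is the coefficient of `X ^ n` in `(X ^ 2 + 3 X + 2) ^ n`, that is, the
constant term of `(x + 3) ^ n` under the substitution `x = t + 2 t⁻¹`. As the Wronskian of
`(x + b) ^ i` and `(x + b) ^ j` is `(j - i) (x + b) ^ (i + j - 1)`, the matrix in question is the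
Gram matrix of the monic polynomials `(x + b) ^ i`, for `b = 3` and `a = 2`, with respect to the
alternating form sending `(f, g)` to the constant term of their Wronskian at `x = t + a t⁻¹`.

The Pfaffian of a Gram matrix is multiplied by `det` under a change of vectors: summed over all
permutations instead of one for each perfect matching, it becomes, up to the order of the stabilizer
of a matching, an alternating multilinear function of the vectors. Hence it is the same for all
monic families of polynomials. A skew-orthogonal monic family is read off from the orthogonality of
the Dickson polynomials `t ^ n + (a t⁻¹) ^ n`, and for it only one matching contributes.
-/

section BlockPerm

open Equiv

variable {ι : Type*}

/-- The permutation of `ι × Fin 2` which permutes the blocks `{i} × Fin 2` by `π` after permuting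
the `i`-th block internally by `ε i`. -/
def blockPerm (π : Perm ι) (ε : ι → Perm (Fin 2)) : Perm (ι × Fin 2) :=
  prodCongrLeft (fun _ => π) * prodCongrRight ε

@[simp]
lemma blockPerm_apply (π : Perm ι) (ε : ι → Perm (Fin 2)) (i : ι) (b : Fin 2) :
    blockPerm π ε (i, b) = (π i, ε i b) :=
  rfl

variable (ι) in
/-- The stabilizer in `Perm (ι × Fin 2)` of the partition into the blocks `{i} × Fin 2`. -/
def blockPermSubgroup : Subgroup (Perm (ι × Fin 2)) where
  carrier := {g | ∃ π ε, blockPerm π ε = g}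
  one_mem' := ⟨1, 1, rfl⟩
  mul_mem' := by
    rintro _ _ ⟨π, ε, rfl⟩ ⟨π', ε', rfl⟩
    exact ⟨π * π', fun i => ε (π' i) * ε' i, Equiv.ext fun _ => rfl⟩
  inv_mem' := by
    rintro _ ⟨π, ε, rfl⟩
    refine ⟨π⁻¹, fun i => (ε (π⁻¹ i))⁻¹, eq_inv_of_mul_eq_one_left ?_⟩
    ext ⟨i, b⟩ <;> simp

variable {R : Type*} [CommRing R] [Fintype ι] [DecidableEq ι]

lemma sign_blockPerm (π : Perm ι) (ε : ι → Perm (Fin 2)) :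
    Perm.sign (blockPerm π ε) = ∏ i, Perm.sign (ε i) := by
  simp [blockPerm, Perm.sign_prodCongrLeft, Perm.sign_prodCongrRight]

/-- The term of the Pfaffian of `A` contributed by the perfect matching
`{{σ (i, 0), σ (i, 1)} | i}` of `ι × Fin 2`. -/
def pfaffianTerm (A : Matrix (ι × Fin 2) (ι × Fin 2) R) (σ : Perm (ι × Fin 2)) : R :=
  Perm.sign σ • ∏ i, A (σ (i, 0)) (σ (i, 1))

lemma perm_fin_two_eq_one_or_swap (e : Perm (Fin 2)) : e = 1 ∨ e = swap 0 1 := by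
  decide +revert

lemma pfaffianTerm_mul_blockPerm {A : Matrix (ι × Fin 2) (ι × Fin 2) R} (hA : A.transpose = -A)
    (σ : Perm (ι × Fin 2)) (π : Perm ι) (ε : ι → Perm (Fin 2)) :
    pfaffianTerm A (σ * blockPerm π ε) = pfaffianTerm A σ := by
  have skew (x y) : A x y = -A y x := congrFun₂ hA y x
  have block (i : ι) : A (σ (π i, ε i 0)) (σ (π i, ε i 1)) =
      Perm.sign (ε i) • A (σ (π i, 0)) (σ (π i, 1)) := by
    rcases perm_fin_two_eq_one_or_swap (ε i) with h | h
    · simp [h]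
    · simp [h, skew (σ (π i, 1))]
  simp only [pfaffianTerm, Perm.mul_apply, blockPerm_apply, block, Finset.prod_smul, map_mul,
    sign_blockPerm, smul_smul, mul_assoc, Int.units_mul_self, mul_one]
  rw [Equiv.prod_comp π fun i => A (σ (i, 0)) (σ (i, 1))]

end BlockPerm

section IsStandard

open Equiv

variable {ι : Type*} [LinearOrder ι]

/-- A permutation of `ι × Fin 2` is standard if, for the lexicographic order, it lists a perfect
matching with the two elements of each block, and then the blocks, in increasing order. -/
def IsStandard (σ : Perm (ι × Fin 2)) : Prop :=
  (∀ i, toLex (σ (i, 0)) < toLex (σ (i, 1))) ∧ StrictMono fun i => toLex (σ (i, 0))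

lemma isStandard_one : IsStandard (1 : Perm (ι × Fin 2)) := by
  simp [IsStandard, StrictMono, Prod.Lex.toLex_lt_toLex]

variable [Finite ι]

lemma IsStandard.blockPerm_eq_one {σ : Perm (ι × Fin 2)} {π : Perm ι} {ε : ι → Perm (Fin 2)}
    (hσ : IsStandard σ) (h : IsStandard (σ * blockPerm π ε)) : blockPerm π ε = 1 := by
  obtain rfl : ε = 1 := funext fun i =>
    (perm_fin_two_eq_one_or_swap (ε i)).resolve_right fun hswap =>
      lt_asymm (hσ.1 (π i)) (by simpa [hswap] using h.1 i)
  have hπ : StrictMono π := fun i j hij => hσ.2.lt_iff_lt.1 (h.2 hij)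
  obtain rfl : π = 1 := DFunLike.coe_injective hπ.eq_id
  rfl

lemma exists_isStandard_mul_blockPerm {N : ℕ} (σ : Perm (Fin N × Fin 2)) :
    ∃ π ε, IsStandard (σ * blockPerm π ε) := by
  have orient (i) : ∃ e : Perm (Fin 2), toLex (σ (i, e 0)) < toLex (σ (i, e 1)) := by
    have hne : toLex (σ (i, 0)) ≠ toLex (σ (i, 1)) := by simp
    rcases hne.lt_or_gt with h | h
    · exact ⟨1, h⟩
    · exact ⟨swap 0 1, by simpa using h⟩
  choose e he using orient
  let least (i : Fin N) := toLex (σ (i, e i 0))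
  have least_injective : Function.Injective least := fun i j h =>
    congrArg Prod.fst (σ.injective h)
  exact ⟨Tuple.sort least, fun i => e (Tuple.sort least i), fun i => he _,
    (Tuple.monotone_sort least).strictMono_of_injective
      (least_injective.comp (Tuple.sort least).injective)⟩

lemma isComplement_isStandard_blockPermSubgroup (N : ℕ) :
    Subgroup.IsComplement {σ : Perm (Fin N × Fin 2) | IsStandard σ}
      (blockPermSubgroup (Fin N) : Set (Perm (Fin N × Fin 2))) := by
  refine Subgroup.isComplement_iff_existsUnique_inv_mul_mem.2 fun σ => ?_
  obtain ⟨π, ε, hσ⟩ := exists_isStandard_mul_blockPerm σ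
  refine ⟨⟨_, hσ⟩, ?_, fun ⟨τ, hτ⟩ hτσ => Subtype.ext ?_⟩
  · simpa using (blockPermSubgroup (Fin N)).inv_mem ⟨π, ε, rfl⟩
  · obtain ⟨π', ε', h⟩ := (blockPermSubgroup (Fin N)).mul_mem hτσ ⟨π, ε, rfl⟩
    have hτ' : τ * blockPerm π' ε' = σ * blockPerm π ε := by simp [h, mul_assoc]
    rwa [hτ.blockPerm_eq_one (hτ' ▸ hσ), mul_one] at hτ'

lemma IsStandard.eq_one {σ : Perm (ι × Fin 2)} (hσ : IsStandard σ)
    (h : ∀ i, (σ (i, 0)).2 = 0 → (σ (i, 1)).1 ≤ (σ (i, 0)).1) : σ = 1 := by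
  have partner (p : ι) : ∃ i, σ (i, 0) = (p, 0) ∧ σ (i, 1) = (p, 1) := by
    -- If `(p, 0)` came second in its block, the first element `(q, c)` would have `q < p`: here
    -- `c = 0` contradicts `h`, and `c = 1` contradicts `(q, 1)` coming second by induction.
    induction p using WellFoundedLT.induction with
    | ind p ih =>
      obtain ⟨⟨i, b⟩, hi⟩ := σ.surjective (p, 0)
      have hlt := Prod.Lex.toLex_lt_toLex.1 (hσ.1 i)
      have hle := h i
      rcases hx : σ (i, 0) with ⟨q, c⟩
      rcases hy : σ (i, 1) with ⟨r, d⟩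
      fin_cases b
      · refine ⟨i, hi, ?_⟩
        grind
      · exfalso
        obtain ⟨j, -, hj⟩ : ∃ j, σ (j, 0) = (q, 0) ∧ σ (j, 1) = (q, 1) := ih q (by grind)
        have : σ (j, 1) ≠ σ (i, 0) := by simp
        grind
  choose f hf using partner
  have f_strictMono : StrictMono f := fun p q hpq =>
    hσ.2.lt_iff_lt.1 (by simpa [hf, Prod.Lex.toLex_lt_toLex] using hpq)
  obtain rfl : f = id := f_strictMono.eq_id
  ext1 ⟨p, b⟩
  fin_cases b
  exacts [(hf p).1, (hf p).2]

end IsStandard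

section Pfaffian

open Equiv Module

/-- The identification of `Fin N × Fin 2`, ordered lexicographically, with `Fin (2 * N)`. -/
def pairEquiv (N : ℕ) : Fin N × Fin 2 ≃ Fin (2 * N) :=
  finProdFinEquiv.trans (finCongr (Nat.mul_comm N 2))

lemma pairEquiv_lt_pairEquiv {N : ℕ} {x y : Fin N × Fin 2} :
    pairEquiv N x < pairEquiv N y ↔ toLex x < toLex y := by
  simp only [pairEquiv, Fin.lt_def, Prod.Lex.toLex_lt_toLex, trans_apply, finProdFinEquiv_apply_val,
    finCongr_apply, Fin.val_cast]
  grind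

variable {R : Type*} [CommRing R] {N : ℕ}

open scoped Classical in
lemma pfaffian_eq_sum_isStandard (A : Matrix (Fin (2 * N)) (Fin (2 * N)) R) :
    pfaffian A = ∑ σ : {σ : Perm (Fin N × Fin 2) // IsStandard σ},
      pfaffianTerm (A.submatrix (pairEquiv N) (pairEquiv N)) σ := by
  have fst (i : Fin N) (h : 2 * i.val < 2 * N) :
      (⟨2 * i.val, h⟩ : Fin (2 * N)) = pairEquiv N (i, 0) := by ext; simp [pairEquiv]
  have snd (i : Fin N) (h : 2 * i.val + 1 < 2 * N) :
      (⟨2 * i.val + 1, h⟩ : Fin (2 * N)) = pairEquiv N (i, 1) := by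
    ext; simp [pairEquiv, add_comm]
  have standard_iff (σ : Perm (Fin (2 * N))) :
      IsStandard ((pairEquiv N).symm.permCongr σ) ↔
        (∀ i, σ (pairEquiv N (i, 0)) < σ (pairEquiv N (i, 1))) ∧
          ∀ i j, i < j → σ (pairEquiv N (i, 0)) < σ (pairEquiv N (j, 0)) := by
    simp [IsStandard, StrictMono, ← pairEquiv_lt_pairEquiv]
  simp only [pfaffian, fst, snd, ← standard_iff]
  rw [← Finset.sum_subtype_eq_sum_filter, Finset.subtype_univ]
  refine Fintype.sum_equiv ((pairEquiv N).symm.permCongr.subtypeEquiv fun σ => Iff.rfl) _ _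
    fun σ => ?_
  simp [pfaffianTerm, Units.smul_def]

lemma sum_pfaffianTerm_submatrix_pairEquiv {A : Matrix (Fin (2 * N)) (Fin (2 * N)) R}
    (hA : A.transpose = -A) :
    ∑ σ, pfaffianTerm (A.submatrix (pairEquiv N) (pairEquiv N)) σ =
      Nat.card (blockPermSubgroup (Fin N)) • pfaffian A := by
  classical
  set B := A.submatrix (pairEquiv N) (pairEquiv N) with hB
  have hB_skew : B.transpose = -B := by
    rw [hB, Matrix.transpose_submatrix, hA, Matrix.submatrix_neg, Pi.neg_apply, Pi.neg_apply]
  rw [← (isComplement_isStandard_blockPermSubgroup N).sum_comp, Fintype.sum_prod_type,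
    pfaffian_eq_sum_isStandard, ← hB, Finset.smul_sum]
  have invariant (σ : Perm (Fin N × Fin 2)) (g : blockPermSubgroup (Fin N)) :
      pfaffianTerm B (σ * g) = pfaffianTerm B σ := by
    obtain ⟨_, π, ε, rfl⟩ := g
    exact pfaffianTerm_mul_blockPerm hB_skew σ π ε
  refine Fintype.sum_congr _ _ fun σ => ?_
  simp [invariant]

lemma pfaffian_eq_prod_of_triangular {A : Matrix (Fin (2 * N)) (Fin (2 * N)) R}
    (hA : ∀ i j b, i < j → A (pairEquiv N (i, 0)) (pairEquiv N (j, b)) = 0) :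
    pfaffian A = ∏ i, A (pairEquiv N (i, 0)) (pairEquiv N (i, 1)) := by
  classical
  rw [pfaffian_eq_sum_isStandard, Fintype.sum_eq_single ⟨1, isStandard_one⟩]
  · simp [pfaffianTerm]
  · rintro ⟨σ, hσ⟩ hne
    obtain ⟨i, h0, hlt⟩ : ∃ i, (σ (i, 0)).2 = 0 ∧ (σ (i, 0)).1 < (σ (i, 1)).1 := by
      by_contra! h
      exact hne (Subtype.ext (hσ.eq_one h))
    refine smul_eq_zero_of_right _ (Finset.prod_eq_zero (Finset.mem_univ i) ?_)
    rw [Matrix.submatrix_apply, ← Prod.mk.eta (p := σ (i, 0)), h0]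
    exact hA _ _ _ hlt

variable {M : Type*} [AddCommGroup M] [Module R M]

/-- The Gram matrix of a family of vectors with respect to a bilinear form. -/
def gramMatrix {ι : Type*} (ω : M →ₗ[R] M →ₗ[R] R) (v : ι → M) : Matrix ι ι R :=
  Matrix.of fun i j => ω (v i) (v j)

lemma pfaffian_gramMatrix_of_skewOrthogonal {ω : M →ₗ[R] M →ₗ[R] R} {p : ℕ → M}
    (hp : ∀ i j, 2 * i + 1 < j → ω (p (2 * i)) (p j) = 0) :
    pfaffian (gramMatrix ω fun i : Fin (2 * N) => p i) =
      ∏ i ∈ Finset.range N, ω (p (2 * i)) (p (2 * i + 1)) := by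
  have val_pairEquiv (i : Fin N) (b : Fin 2) : (pairEquiv N (i, b) : ℕ) = 2 * i + b := by
    simp [pairEquiv, add_comm]
  rw [pfaffian_eq_prod_of_triangular, Finset.prod_range]
  · simp [gramMatrix, val_pairEquiv]
  · intro i j b hij
    rw [gramMatrix, Matrix.of_apply, val_pairEquiv, val_pairEquiv]
    exact hp i _ (by lia)

/-- The multilinear map `v ↦ ∏ i, ω (v (i, 0)) (v (i, 1))`. -/
def prodPairing (ι : Type*) [Fintype ι] (ω : M →ₗ[R] M →ₗ[R] R) :
    MultilinearMap R (fun _ : ι × Fin 2 => M) R :=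
  MultilinearMap.domDomCongr (Equiv.sigmaEquivProd ι (Fin 2)) <|
    (MultilinearMap.mkPiAlgebra R ι R).compMultilinearMap (N := fun _ _ => M) fun _ =>
      (MultilinearMap.ofSubsingletonₗ R R M R (0 : Fin 1) ∘ₗ ω).uncurryLeft

lemma alternatization_prodPairing_apply {ι : Type*} [Fintype ι] [DecidableEq ι]
    (ω : M →ₗ[R] M →ₗ[R] R) (v : ι × Fin 2 → M) :
    (prodPairing ι ω).alternatization v = ∑ σ, pfaffianTerm (gramMatrix ω v) σ :=
  MultilinearMap.alternatization_apply _ _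

lemma pfaffian_gramMatrix [IsAddTorsionFree R] {ω : M →ₗ[R] M →ₗ[R] R} (hω : ω.IsAlt)
    (e : Basis (Fin (2 * N)) R M) (v : Fin (2 * N) → M) :
    pfaffian (gramMatrix ω v) = e.det v * pfaffian (gramMatrix ω e) := by
  let f : M [⋀^Fin (2 * N)]→ₗ[R] R :=
    (prodPairing (Fin N) ω).alternatization.domDomCongr (pairEquiv N)
  have f_apply (w : Fin (2 * N) → M) :
      f w = Nat.card (blockPermSubgroup (Fin N)) • pfaffian (gramMatrix ω w) := by
    rw [← sum_pfaffianTerm_submatrix_pairEquiv]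
    · exact alternatization_prodPairing_apply ω _
    · ext i j
      exact (hω.neg _ _).symm
  have card_ne_zero : Nat.card (blockPermSubgroup (Fin N)) ≠ 0 := Nat.card_pos.ne'
  refine IsAddTorsionFree.nsmul_right_injective (M := R) card_ne_zero ?_
  calc Nat.card (blockPermSubgroup (Fin N)) • pfaffian (gramMatrix ω v)
    _ = f v := (f_apply v).symm
    _ = f e * e.det v := DFunLike.congr_fun (f.eq_smul_basis_det e) v
    _ = Nat.card (blockPermSubgroup (Fin N)) • (e.det v * pfaffian (gramMatrix ω e)) := by
      rw [f_apply, mul_comm, mul_smul_comm]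

end Pfaffian

section Monic

open Module Polynomial

variable {R : Type*} [CommRing R] [IsAddTorsionFree R]

lemma pfaffian_gramMatrix_eq_X_pow {ω : R[X] →ₗ[R] R[X] →ₗ[R] R} (hω : ω.IsAlt) {p : ℕ → R[X]}
    (hp : ∀ n, IsMonicOfDegree (p n) n) (N : ℕ) :
    pfaffian (gramMatrix ω fun i : Fin (2 * N) => p i) =
      pfaffian (gramMatrix ω fun i : Fin (2 * N) => X ^ (i : ℕ)) := by
  let e := degreeLT.basis R (2 * N)
  let v (i : Fin (2 * N)) : degreeLT R (2 * N) :=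
    ⟨p i, mem_degreeLT.2 <| degree_le_natDegree.trans_lt <| by
      rw [(hp i).natDegree_eq]
      exact_mod_cast i.isLt⟩
  have det_v : e.det v = 1 := by
    rw [Basis.det_apply, ← Matrix.det_matrixOfPolynomials (fun i => p i)
      (fun i => (hp i).natDegree_eq) (fun i => (hp i).monic)]
    rfl
  let ω' := ω.compl₁₂ (degreeLT R (2 * N)).subtype (degreeLT R (2 * N)).subtype
  have hω' : ω'.IsAlt := fun f => hω f
  have gramMatrix_coe (w : Fin (2 * N) → degreeLT R (2 * N)) :
      gramMatrix ω (fun i => (w i : R[X])) = gramMatrix ω' w :=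
    rfl
  calc pfaffian (gramMatrix ω fun i : Fin (2 * N) => p i)
    _ = pfaffian (gramMatrix ω' e) := by
      rw [gramMatrix_coe v, pfaffian_gramMatrix hω' e, det_v, one_mul]
    _ = pfaffian (gramMatrix ω fun i : Fin (2 * N) => X ^ (i : ℕ)) := by
      simp only [← gramMatrix_coe, e, degreeLT.basis_val]

lemma pfaffian_gramMatrix_eq_of_isMonicOfDegree {ω : R[X] →ₗ[R] R[X] →ₗ[R] R} (hω : ω.IsAlt)
    {p q : ℕ → R[X]} (hp : ∀ n, IsMonicOfDegree (p n) n) (hq : ∀ n, IsMonicOfDegree (q n) n)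
    (N : ℕ) :
    pfaffian (gramMatrix ω fun i : Fin (2 * N) => p i) =
      pfaffian (gramMatrix ω fun i : Fin (2 * N) => q i) := by
  rw [pfaffian_gramMatrix_eq_X_pow hω hp, pfaffian_gramMatrix_eq_X_pow hω hq]

end Monic

section Dickson

open Polynomial

variable {R : Type*} [CommRing R]

lemma dickson_one_zero_eq_two (a : R) : dickson 1 a 0 = 2 := by
  norm_num [dickson_zero]

lemma dickson_two_zero_eq_one (a : R) : dickson 2 a 0 = 1 := by
  norm_num [dickson_zero]

lemma aeval_add_dickson_one {A : Type*} [CommRing A] [Algebra R A] {a : R} {x y : A}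
    (hxy : x * y = algebraMap R A a) (n : ℕ) :
    aeval (x + y) (dickson 1 a n) = x ^ n + y ^ n := by
  induction n using Nat.twoStepInduction with
  | zero => rw [dickson_one_zero_eq_two, map_ofNat, pow_zero, pow_zero, one_add_one_eq_two]
  | one => simp
  | more n ih ih' =>
    rw [dickson_add_two, map_sub, map_mul, map_mul, aeval_X, aeval_C, ← hxy, ih, ih']
    ring

lemma dickson_one_add_two (a : R) (n : ℕ) :
    dickson 1 a (n + 2) = dickson 2 a (n + 2) - C a * dickson 2 a n := by
  induction n using Nat.twoStepInduction with
  | zero =>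
    simp only [dickson_add_two, dickson_one_zero_eq_two, dickson_two_zero_eq_one, dickson_one,
      zero_add]
    ring
  | one =>
    simp only [dickson_add_two, dickson_one_zero_eq_two, dickson_two_zero_eq_one, dickson_one,
      zero_add]
    ring
  | more n ih ih' =>
    rw [dickson_add_two 1 a (n + 2), ih, ih', dickson_add_two 2 a (n + 2), dickson_add_two 2 a n]
    ring

lemma derivative_dickson_one_succ (a : R) (n : ℕ) :
    derivative (dickson 1 a (n + 1)) = (n + 1) • dickson 2 a n := by
  induction n using Nat.twoStepInduction with
  | zero => rw [dickson_one, derivative_X, dickson_two_zero_eq_one, zero_add, one_smul]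
  | one =>
    rw [dickson_add_two, dickson_one_zero_eq_two, ← C_ofNat, ← C_mul, derivative_sub,
      derivative_C, dickson_one, dickson_one, derivative_mul, derivative_X]
    ring
  | more n ih ih' =>
    rw [dickson_add_two 1 a (n + 1), derivative_sub, derivative_mul, derivative_C_mul, ih, ih',
      derivative_X, dickson_one_add_two, dickson_add_two 2 a n]
    simp only [nsmul_eq_mul]
    push_cast
    ring

lemma isMonicOfDegree_dickson_one_succ [Nontrivial R] (a : R) (n : ℕ) :
    IsMonicOfDegree (dickson 1 a (n + 1)) (n + 1) := by
  induction n using Nat.twoStepInduction with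
  | zero => simpa using isMonicOfDegree_X R
  | one =>
    rw [dickson_add_two, dickson_one_zero_eq_two, ← C_ofNat, ← C_mul, dickson_one, ← sq]
    exact (isMonicOfDegree_X_pow R 2).sub ((natDegree_C _).trans_lt zero_lt_two)
  | more n ih ih' =>
    rw [dickson_add_two, add_comm (n + 2)]
    refine ((isMonicOfDegree_X R).mul ih').sub ((natDegree_C_mul_le _ _).trans_lt ?_)
    rw [ih.natDegree_eq]
    lia

end Dickson

section ConstantTerm

open Polynomial
open LaurentPolynomial (T T_add T_apply T_pow T_zero)
open scoped LaurentPolynomial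

variable {R : Type*} [CommRing R]

/-- The functional `f ↦ [t⁰] f(t + a t⁻¹)`, for which the Dickson polynomials of the first kind
are orthogonal. -/
noncomputable def constantTerm (a : R) : R[X] →ₗ[R] R :=
  Finsupp.lapply 0 ∘ₗ (AddMonoidAlgebra.coeffLinearEquiv R (M := ℤ)).toLinearMap ∘ₗ
    (aeval (T 1 + a • T (-1))).toLinearMap

lemma constantTerm_apply (a : R) (f : R[X]) :
    constantTerm a f = (aeval (T 1 + a • T (-1) : R[T;T⁻¹]) f).coeff 0 :=
  rfl

lemma aeval_T_add_smul_T_dickson_one (a : R) (n : ℕ) :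
    aeval (T 1 + a • T (-1) : R[T;T⁻¹]) (dickson 1 a n) = T n + a ^ n • T (-n) := by
  rw [aeval_add_dickson_one, _root_.smul_pow, T_pow, T_pow, mul_one, mul_neg_one]
  rw [mul_smul_comm, ← T_add, Algebra.smul_def, add_neg_cancel, T_zero, mul_one]

lemma constantTerm_dickson_one (a : R) (n : ℕ) :
    constantTerm a (dickson 1 a n) = if n = 0 then 2 else 0 := by
  rw [constantTerm_apply, aeval_T_add_smul_T_dickson_one]
  rcases eq_or_ne n 0 with rfl | hn
  · norm_num
  · simp [hn]

lemma constantTerm_dickson_one_mul_dickson_one_succ (a : R) (m n : ℕ) :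
    constantTerm a (dickson 1 a m * dickson 1 a (n + 1)) =
      if m = n + 1 then 2 * a ^ (n + 1) else 0 := by
  rw [constantTerm_apply, map_mul, aeval_T_add_smul_T_dickson_one,
    aeval_T_add_smul_T_dickson_one]
  simp only [mul_add, add_mul, smul_mul_assoc, mul_smul_comm, ← T_add, AddMonoidAlgebra.coeff_add,
    AddMonoidAlgebra.coeff_smul, Finsupp.add_apply, Finsupp.smul_apply, T_apply]
  have h₁ : (m : ℤ) + (n + 1 : ℕ) ≠ 0 := by lia
  have h₂ : -(m : ℤ) + (n + 1 : ℕ) = 0 ↔ m = n + 1 := by lia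
  have h₃ : (m : ℤ) + -(n + 1 : ℕ) = 0 ↔ m = n + 1 := by lia
  have h₄ : -(m : ℤ) + -(n + 1 : ℕ) ≠ 0 := by lia
  simp only [h₁, h₂, h₃, h₄, if_false]
  split_ifs with hmn
  · subst hmn
    simp [two_mul]
  · simp

lemma constantTerm_dickson_one_mul_dickson_two (a : R) (m n : ℕ) :
    constantTerm a (dickson 1 a m * dickson 2 a n) =
      if m ≤ n ∧ Even (m + n) then 2 * a ^ ((m + n) / 2) else 0 := by
  induction n using Nat.twoStepInduction with
  | zero =>
    rw [dickson_two_zero_eq_one, mul_one, constantTerm_dickson_one]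
    rcases eq_or_ne m 0 with rfl | hm <;> simp [*]
  | one =>
    rw [dickson_one, ← dickson_one 1 a, constantTerm_dickson_one_mul_dickson_one_succ a m 0]
    rcases eq_or_ne m 1 with rfl | hm
    · simp
    · have : ¬(m ≤ 1 ∧ Even (m + 1)) := by grind
      simp [hm, this]
  | more n ih _ =>
    have : dickson 2 a (n + 2) = dickson 1 a (n + 2) + a • dickson 2 a n := by
      rw [dickson_one_add_two, smul_eq_C_mul, sub_add_cancel]
    rw [this, mul_add, map_add, mul_smul_comm, map_smul, ih,
      constantTerm_dickson_one_mul_dickson_one_succ]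
    rcases eq_or_ne m (n + 2) with rfl | hm
    · simp [show (n + 2 + (n + 2)) / 2 = n + 2 by lia]
    · have half_add : (m + (n + 2)) / 2 = (m + n) / 2 + 1 := by lia
      have cond_iff : m ≤ n + 2 ∧ Even (m + (n + 2)) ↔ m ≤ n ∧ Even (m + n) := by grind
      rw [if_neg hm, zero_add, half_add, smul_eq_mul, mul_ite, mul_zero, pow_succ']
      simp only [cond_iff, mul_left_comm]

end ConstantTerm

section ConstantTermWronskian

open Polynomial

variable {R : Type*} [CommRing R]

lemma wronskian_pow_pow (p : R[X]) (i j : ℕ) :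
    wronskian (p ^ i) (p ^ j) = C (j - i : R) * p ^ (i + j - 1) * derivative p := by
  rcases i with _ | i <;> rcases j with _ | j <;> simp [wronskian, derivative_pow] <;> ring

/-- The alternating bilinear form `(f, g) ↦ [t⁰] (f g' - f' g)(t + a t⁻¹)`. -/
noncomputable def constantTermWronskian (a : R) : R[X] →ₗ[R] R[X] →ₗ[R] R :=
  (wronskianBilin R).compr₂ (constantTerm a)

lemma constantTermWronskian_apply (a : R) (f g : R[X]) :
    constantTermWronskian a f g = constantTerm a (wronskian f g) :=
  rfl

lemma isAlt_constantTermWronskian (a : R) : (constantTermWronskian a).IsAlt := fun f => by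
  rw [constantTermWronskian_apply, wronskian_self_eq_zero, map_zero]

lemma constantTermWronskian_dickson_one (a : R) {m n : ℕ} (hmn : m ≤ n) :
    constantTermWronskian a (dickson 1 a m) (dickson 1 a (n + 1)) =
      if Even (m + n) then 2 * (n + 1) * a ^ ((m + n) / 2) else 0 := by
  have vanish : constantTerm a (derivative (dickson 1 a m) * dickson 1 a (n + 1)) = 0 := by
    rcases m with _ | m
    · simp
    · rw [derivative_dickson_one_succ, smul_mul_assoc, map_nsmul, mul_comm,
        constantTerm_dickson_one_mul_dickson_two, if_neg (by lia), smul_zero]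
  rw [constantTermWronskian_apply, wronskian, map_sub, vanish, sub_zero,
    derivative_dickson_one_succ, mul_smul_comm, map_nsmul,
    constantTerm_dickson_one_mul_dickson_two]
  simp only [hmn, true_and, nsmul_eq_mul]
  split_ifs <;> push_cast <;> ring

/-- The central coefficient of `(X² + b X + a)ⁿ`. -/
noncomputable def centralTrinomial (b a : R) (n : ℕ) : R :=
  ((X ^ 2 + C b * X + C a) ^ n).coeff n

open LaurentPolynomial (T T_add T_pow)
open scoped LaurentPolynomial

lemma constantTerm_X_add_C_pow (b a : R) (n : ℕ) :
    constantTerm a ((X + C b) ^ n) = centralTrinomial b a n := by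
  have clear_denominator : aeval (T 1 + a • T (-1) : R[T;T⁻¹]) (X + C b) =
      toLaurent (X ^ 2 + C b * X + C a) * T (-1) := by
    have aeval_eq : aeval (T 1 + a • T (-1) : R[T;T⁻¹]) (X + C b) =
        T 1 + LaurentPolynomial.C a * T (-1) + LaurentPolynomial.C b := by
      simp [LaurentPolynomial.smul_eq_C_mul]
    simp only [aeval_eq, map_add, toLaurent_X_pow, map_mul, toLaurent_C, toLaurent_X, add_mul,
      mul_assoc, ← T_add]
    norm_num
    ring
  rw [constantTerm_apply, map_pow, clear_denominator, mul_pow, ← map_pow, T_pow, mul_neg_one, T,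
    AddMonoidAlgebra.coeff_mul_single_apply, zero_add, neg_neg, mul_one,
    LaurentPolynomial.coeff_toLaurent]
  exact Finsupp.mapDomain_apply Nat.castEmbedding.injective _ n

lemma constantTermWronskian_X_add_C_pow (b a : R) (i j : ℕ) :
    constantTermWronskian a ((X + C b) ^ i) ((X + C b) ^ j) =
      (j - i) * centralTrinomial b a (i + j - 1) := by
  rw [constantTermWronskian_apply, wronskian_pow_pow, derivative_X_add_C, mul_one, ← smul_eq_C_mul,
    map_smul, smul_eq_mul, constantTerm_X_add_C_pow]

lemma delannoy_eq_centralTrinomial (n : ℕ) : delannoy n = centralTrinomial 3 2 n := by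
  have factor : (X ^ 2 + C 3 * X + C 2 : ℚ[X]) = (X + 1) * (X + 1 + 1) := by
    simp only [C_ofNat]
    ring
  rw [centralTrinomial, factor, mul_pow, add_pow (X + 1 : ℚ[X]) 1, Finset.mul_sum,
    finsetSum_coeff, delannoy]
  refine Finset.sum_congr rfl fun k _ => ?_
  simp only [one_pow, mul_one, ← mul_assoc, ← pow_add, coeff_mul_natCast, coeff_X_add_one_pow]
  rw [mul_comm, Nat.choose_symm_add]

end ConstantTermWronskian

section SkewDickson

open Polynomial

variable {K : Type*} [Field K]

/-- The monic polynomials which are skew-orthogonal for `constantTermWronskian a`, obtained by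
correcting the odd Dickson polynomials of the first kind. -/
noncomputable def skewDickson (a : K) : ℕ → K[X]
  | 0 => 1
  | 1 => X
  | n + 2 =>
    if Even n then dickson 1 a (n + 2)
    else dickson 1 a (n + 2) - C (a * (n + 2) / n) * dickson 1 a n

lemma isMonicOfDegree_skewDickson (a : K) (n : ℕ) : IsMonicOfDegree (skewDickson a n) n := by
  match n with
  | 0 => simp [skewDickson]
  | 1 => exact isMonicOfDegree_X K
  | n + 2 =>
    have hd := isMonicOfDegree_dickson_one_succ a (n + 1)
    rw [skewDickson]
    split_ifs with hn
    · exact hd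
    · obtain ⟨k, rfl⟩ := Nat.not_even_iff_odd.1 hn
      refine hd.sub ((natDegree_C_mul_le _ _).trans_lt ?_)
      rw [(isMonicOfDegree_dickson_one_succ a (2 * k)).natDegree_eq]
      lia

lemma constantTermWronskian_skewDickson_zero_one (a : K) :
    constantTermWronskian a (skewDickson a 0) (skewDickson a 1) = 1 := by
  simp [skewDickson, constantTermWronskian_apply, wronskian, constantTerm_apply]

variable [CharZero K]

lemma exists_skewDickson_two_mul_eq_smul (a : K) (i : ℕ) :
    ∃ c : K, skewDickson a (2 * i) = c • dickson 1 a (2 * i) := by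
  rcases i with _ | i
  · refine ⟨2⁻¹, ?_⟩
    rw [dickson_one_zero_eq_two, ← C_ofNat, smul_C]
    simp [skewDickson]
  · exact ⟨1, by simp [skewDickson, mul_add_one]⟩

lemma constantTermWronskian_skewDickson_eq_zero (a : K) {i j : ℕ} (hij : 2 * i + 1 < j) :
    constantTermWronskian a (skewDickson a (2 * i)) (skewDickson a j) = 0 := by
  obtain ⟨c, hc⟩ := exists_skewDickson_two_mul_eq_smul a i
  suffices constantTermWronskian a (dickson 1 a (2 * i)) (skewDickson a j) = 0 by
    rw [hc, map_smul, LinearMap.smul_apply, this, smul_zero]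
  obtain ⟨n, rfl⟩ := Nat.exists_eq_add_of_le' (show 2 ≤ j by lia)
  rw [skewDickson]
  split_ifs with hn
  · rw [constantTermWronskian_dickson_one a (by lia), if_neg (by grind)]
  · obtain ⟨k, rfl⟩ := Nat.not_even_iff_odd.1 hn
    rw [map_sub, ← smul_eq_C_mul, map_smul, constantTermWronskian_dickson_one a (by lia),
      constantTermWronskian_dickson_one a (by lia), if_pos (by grind), if_pos (by grind),
      show (2 * i + (2 * k + 1 + 1)) / 2 = i + k + 1 by lia,
      show (2 * i + 2 * k) / 2 = i + k by lia]
    have denom_ne_zero : (2 * k + 1 : K) ≠ 0 := by exact_mod_cast Nat.succ_ne_zero (2 * k)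
    push_cast
    simp only [smul_eq_mul]
    field_simp
    ring

lemma constantTermWronskian_skewDickson_consecutive (a : K) (n : ℕ) :
    constantTermWronskian a (skewDickson a (2 * (n + 1))) (skewDickson a (2 * (n + 1) + 1)) =
      2 * a ^ (2 * (n + 1)) * (2 * n + 3) / (2 * n + 1) * (4 * n + 3) := by
  have not_even : ¬Even (2 * n + 1) := by grind
  have denom_ne_zero : (2 * n + 1 : K) ≠ 0 := by exact_mod_cast Nat.succ_ne_zero (2 * n)
  rw [show 2 * (n + 1) = 2 * n + 2 by ring, show 2 * n + 2 + 1 = (2 * n + 1) + 2 by ring,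
    skewDickson, skewDickson, if_pos (even_two_mul n), if_neg not_even, map_sub, ← smul_eq_C_mul,
    map_smul, constantTermWronskian_dickson_one a (by lia), ← (isAlt_constantTermWronskian a).neg,
    constantTermWronskian_dickson_one a (by lia), if_pos (by grind), if_pos (by grind),
    show (2 * n + 2 + (2 * n + 1 + 1)) / 2 = 2 * n + 2 by lia,
    show (2 * n + 1 + (2 * n + 1)) / 2 = 2 * n + 1 by lia]
  push_cast
  simp only [smul_eq_mul]
  field_simp
  ring

lemma prod_constantTermWronskian_skewDickson (a : K) (n : ℕ) :
    ∏ i ∈ Finset.range (n + 1),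
        constantTermWronskian a (skewDickson a (2 * i)) (skewDickson a (2 * i + 1)) =
      (2 * a ^ (n + 1)) ^ n * (2 * n + 1) * ∏ k ∈ Finset.Icc 1 n, (4 * (k : K) - 1) := by
  induction n with
  | zero => simp [constantTermWronskian_skewDickson_zero_one]
  | succ n ih =>
    have denom_ne_zero : (2 * n + 1 : K) ≠ 0 := by exact_mod_cast Nat.succ_ne_zero (2 * n)
    rw [Finset.prod_range_succ, ih, constantTermWronskian_skewDickson_consecutive,
      Finset.prod_Icc_succ_top (by lia)]
    push_cast
    field_simp
    ring

theorem pfaffian_delannoy_general (b a : K) {n : ℕ} (hn : 1 ≤ n) :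
    pfaffian (N := n) (Matrix.of fun i j : Fin (2 * n) =>
        ((j.val : K) - i.val) * centralTrinomial b a (i.val + j.val - 1)) =
      (2 * a ^ n) ^ (n - 1) * (2 * (n : K) - 1) *
        ∏ k ∈ Finset.Icc 1 (n - 1), (4 * (k : K) - 1) := by
  obtain ⟨m, rfl⟩ := Nat.exists_eq_add_of_le' hn
  have gram_eq : (Matrix.of fun i j : Fin (2 * (m + 1)) =>
        ((j.val : K) - i.val) * centralTrinomial b a (i.val + j.val - 1)) =
      gramMatrix (constantTermWronskian a) fun i : Fin _ => (X + C b) ^ (i : ℕ) := by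
    simp only [gramMatrix, constantTermWronskian_X_add_C_pow]
  rw [gram_eq, pfaffian_gramMatrix_eq_of_isMonicOfDegree (isAlt_constantTermWronskian a)
      (fun k => by simpa using (isMonicOfDegree_X_add_one b).pow k) (isMonicOfDegree_skewDickson a),
    pfaffian_gramMatrix_of_skewOrthogonal fun i j => constantTermWronskian_skewDickson_eq_zero a,
    prod_constantTermWronskian_skewDickson]
  push_cast
  ring

end SkewDickson

/-- For every positive integer `n`, the Pfaffian of the `2n × 2n` skew-symmetric
matrix with entries `(j-i)·D_{i+j-3}` (1-based; here 0-based, so the entry at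
`(i,j)` is `(j-i)·D_{i+j-1}`, the `(0,0)` entry being `0`) equals
`2^{(n+1)(n-1)}·(2n-1)·∏_{k=1}^{n-1} (4k-1)`. -/
theorem pfaffian_delannoy (n : ℕ) (hn : 1 ≤ n) :
    pfaffian (N := n) (Matrix.of fun i j : Fin (2 * n) =>
        ((j.val : ℚ) - (i.val : ℚ)) * delannoy (i.val + j.val - 1)) =
      2 ^ ((n + 1) * (n - 1)) * (2 * (n : ℚ) - 1) *
        ∏ k ∈ Finset.Icc 1 (n - 1), (4 * (k : ℚ) - 1) := by
  simp only [delannoy_eq_centralTrinomial]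
  rw [pfaffian_delannoy_general 3 2 hn, ← pow_succ', ← pow_mul]
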